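/- arXiv:1103.5575 — 2 statements merged into one kernel-verified Lean document; each statement's English description precedes it below -/
import Mathlib

section
/- Let p > 0 with p ≠ 1, b ∈ ℝ, c ≥ 0, let F be a Lévy measure on ℝ with F((−∞,−1]) = 0 and ∫_{(1,∞)} (1+x)^{1−p} dF(x) < ∞, and let h be a truncation function. Then for every π in the interior of the set A = {π ∈ ℝ : F({x : 1 + πx ≤ 0}) = 0}, the function x ↦ ((1+πx)^{1−p} − 1)/(1−p) − π h(x) is F-integrable, and the function g(π) := πb − pπ²c/2 + ∫_{(−1,∞)} (((1+πx)^{1−p} − 1)/(1−p) − π h(x)) dF(x) is finite, continuous and concave on the interior of A. -/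
open MeasureTheory Set Filter
open scoped ENNReal Topology

/-! Near the origin the utility of `1 + ⟪π, x⟫`, compensated by the truncated linear term, is
`O(‖x‖ ^ 2)` by Taylor's formula, so small jumps are integrable for every Lévy measure. An interior
exposure `π` can be perturbed in every direction without leaving the admissible set, which forces
`ε * ‖x‖ ≤ 1 + ⟪π, x⟫` for almost every `x`. Away from the origin `1 + ⟪π, x⟫` is therefore
comparable to `‖x‖`, so its powers inherit integrability from those of `‖x‖`, whatever the sign of
the exponent. Concavity passes from the utility to the integral, and a finite concave function on
an open convex set in finite dimension is continuous. -/

open Asymptotics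
open scoped RealInnerProductSpace

theorem isBigO_sub_sub_smul_deriv {G : Type*} [NormedAddCommGroup G] [NormedSpace ℝ G]
    {f f' : ℝ → G} {f'' : G} {a : ℝ}
    (hf : ∀ᶠ x in 𝓝 a, HasDerivAt f (f' x) x) (hf' : HasDerivAt f' f'' a) :
    (fun x => f x - f a - (x - a) • f' a) =O[𝓝 a] fun x => (x - a) ^ 2 := by
  obtain ⟨r, hr, hball⟩ := Metric.eventually_nhds_iff_ball.mp hf
  have hderiv : ∀ x ∈ Metric.ball a r, HasDerivWithinAt
      (fun x => f x - (x - a) • f' a - ((x - a) ^ 2 / 2) • f'')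
      (f' x - f' a - (x - a) • f'') (Metric.ball a r) x := fun x hx => by
    have hlin := (hasDerivAt_id' x).sub_const a
    have hquad := (hlin.pow 2).div_const 2
    refine (((hball x hx).sub (hlin.smul_const (f' a))).sub
      (hquad.smul_const f'')).hasDerivWithinAt.congr_deriv ?_
    simp
  have htaylor : (fun x => f x - f a - (x - a) • f' a - ((x - a) ^ 2 / 2) • f'')
      =o[𝓝 a] fun x => (x - a) ^ 2 := by
    have hf'o : (fun x => f' x - f' a - (x - a) • f'') =o[𝓝[Metric.ball a r] a]
        fun x => (x - a) ^ 1 := by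
      simpa only [pow_one] using hf'.isLittleO.mono nhdsWithin_le_nhds
    have := (convex_ball a r).isLittleO_pow_succ_real (Metric.mem_ball_self hr) hderiv hf'o
    rw [Metric.isOpen_ball.nhdsWithin_eq (Metric.mem_ball_self hr)] at this
    refine this.congr_left fun x => ?_
    simp only [sub_self, zero_smul, ne_eq, OfNat.ofNat_ne_zero, not_false_eq_true, zero_pow,
      zero_div, sub_zero]
    abel
  have hquad : (fun x => ((x - a) ^ 2 / 2) • f'') =O[𝓝 a] fun x => (x - a) ^ 2 := by
    refine .of_bound (‖f''‖ / 2) (.of_forall fun x => le_of_eq ?_)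
    rw [norm_smul, norm_div, Real.norm_ofNat]
    ring
  simpa only [sub_add_cancel] using htaylor.isBigO.add hquad

theorem concaveOn_integral {α V : Type*} [MeasurableSpace α] {μ : Measure α} [AddCommGroup V]
    [Module ℝ V] {s : Set V} {f : V → α → ℝ} (hs : Convex ℝ s)
    (hint : ∀ v ∈ s, Integrable (f v) μ)
    (hf : ∀ v ∈ s, ∀ w ∈ s, ∀ a b : ℝ, 0 ≤ a → 0 ≤ b → a + b = 1 →
      ∀ᵐ x ∂μ, a * f v x + b * f w x ≤ f (a • v + b • w) x) :
    ConcaveOn ℝ s fun v => ∫ x, f v x ∂μ := by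
  refine ⟨hs, fun v hv w hw a b ha hb hab => ?_⟩
  have hav := (hint v hv).const_mul a
  have hbw := (hint w hw).const_mul b
  calc a • ∫ x, f v x ∂μ + b • ∫ x, f w x ∂μ
      = ∫ x, (a * f v x + b * f w x) ∂μ := by
        rw [integral_add hav hbw, integral_const_mul, integral_const_mul, smul_eq_mul, smul_eq_mul]
    _ ≤ ∫ x, f (a • v + b • w) x ∂μ :=
        integral_mono_ae (hav.add hbw) (hint _ (hs hv hw ha hb hab)) (hf v hv w hw a b ha hb hab)

theorem convexOn_quadraticForm {V : Type*} [AddCommGroup V] [Module ℝ V] {Q : QuadraticForm ℝ V}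
    (hQ : ∀ v, 0 ≤ Q v) : ConvexOn ℝ univ Q := by
  refine ⟨convex_univ, fun v _ w _ a b ha hb hab => ?_⟩
  have hsub : Q (v - w) = Q v + Q w - QuadraticMap.polar Q v w := by
    rw [sub_eq_add_neg, QuadraticMap.map_add Q, QuadraticMap.map_neg, QuadraticMap.polar_neg_right,
      sub_eq_add_neg]
  have hdefect : a • Q v + b • Q w - Q (a • v + b • w) = a * b * Q (v - w) := by
    rw [hsub, QuadraticMap.map_add Q, QuadraticMap.map_smul, QuadraticMap.map_smul,
      QuadraticMap.polar_smul_left, QuadraticMap.polar_smul_right]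
    simp only [smul_eq_mul]
    linear_combination (-a * Q v - b * Q w) * hab
  have := mul_nonneg (mul_nonneg ha hb) (hQ (v - w))
  linarith

theorem integrable_rpow_of_comparable {α : Type*} [MeasurableSpace α] {μ : Measure α}
    {f g : α → ℝ} {k K q : ℝ} (hf : Integrable (fun x => f x ^ q) μ) (hg : AEMeasurable g μ)
    (hk : 0 < k) (hf0 : ∀ᵐ x ∂μ, 0 < f x) (hlow : ∀ᵐ x ∂μ, k * f x ≤ g x)
    (hup : ∀ᵐ x ∂μ, g x ≤ K * f x) : Integrable (fun x => g x ^ q) μ := by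
  refine (hf.const_mul (k ^ q + K ^ q)).mono' (hg.pow_const q).aestronglyMeasurable ?_
  filter_upwards [hf0, hlow, hup] with x hfx hkx hKx
  have hkf : 0 < k * f x := mul_pos hk hfx
  have hK : 0 < K := pos_of_mul_pos_left (hkf.trans_le (hkx.trans hKx)) hfx.le
  rw [Real.norm_of_nonneg (Real.rpow_nonneg (hkf.le.trans hkx) q), add_mul,
    ← Real.mul_rpow hk.le hfx.le, ← Real.mul_rpow hK.le hfx.le]
  rcases le_total 0 q with hq | hq
  · exact (Real.rpow_le_rpow (hkf.le.trans hkx) hKx hq).trans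
      (le_add_of_nonneg_left (Real.rpow_nonneg hkf.le q))
  · exact (Real.rpow_le_rpow_of_nonpos hkf hkx hq).trans
      (le_add_of_nonneg_right (Real.rpow_nonneg (mul_pos hK hfx).le q))

section PowerUtility

/-- Utility with constant relative risk aversion `p`, normalised so that it vanishes at `1` and
has slope `1` there. At `p = 1` division by zero makes it `0` instead of the logarithm. -/
noncomputable def powerUtility (p y : ℝ) : ℝ := (y ^ (1 - p) - 1) / (1 - p)

variable {p : ℝ}

theorem hasDerivAt_powerUtility (hp1 : p ≠ 1) {y : ℝ} (hy : 0 < y) :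
    HasDerivAt (powerUtility p) (y ^ (-p)) y := by
  have hq : 1 - p ≠ 0 := sub_ne_zero.mpr hp1.symm
  refine (((Real.hasDerivAt_rpow_const (p := 1 - p) (.inl hy.ne')).sub_const 1).div_const
    (1 - p)).congr_deriv ?_
  rw [mul_div_cancel_left₀ _ hq, sub_sub_cancel_left]

theorem concaveOn_powerUtility (hp : 0 ≤ p) (hp1 : p ≠ 1) :
    ConcaveOn ℝ (Ioi 0) (powerUtility p) := by
  have hd : ∀ y ∈ Ioi (0 : ℝ), HasDerivAt (powerUtility p) (y ^ (-p)) y :=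
    fun y hy => hasDerivAt_powerUtility hp1 hy
  refine AntitoneOn.concaveOn_of_deriv (convex_Ioi 0)
    (fun y hy => (hd y hy).continuousAt.continuousWithinAt) ?_ ?_
  · rw [interior_Ioi]
    exact fun y hy => (hd y hy).differentiableAt.differentiableWithinAt
  · rw [interior_Ioi]
    intro x hx y hy hxy
    rw [(hd x hx).deriv, (hd y hy).deriv]
    exact Real.rpow_le_rpow_of_nonpos hx hxy (neg_nonpos.mpr hp)

theorem isBigO_powerUtility_one_add_sub (hp1 : p ≠ 1) :
    (fun t => powerUtility p (1 + t) - t) =O[𝓝 0] fun t => t ^ 2 := by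
  have hderiv : ∀ᶠ y in 𝓝 (1 : ℝ), HasDerivAt (powerUtility p) (y ^ (-p)) y :=
    (lt_mem_nhds one_pos).mono fun _ hy => hasDerivAt_powerUtility hp1 hy
  have htaylor := isBigO_sub_sub_smul_deriv hderiv
    (Real.hasDerivAt_rpow_const (.inl one_ne_zero))
  have hshift : Tendsto (fun t : ℝ => 1 + t) (𝓝 0) (𝓝 1) :=
    Continuous.tendsto' (by fun_prop) _ _ (add_zero 1)
  simpa [powerUtility, Function.comp_def] using htaylor.comp_tendsto hshift

end PowerUtility

section LevyMeasure

variable {E : Type*} [NormedAddCommGroup E] [MeasurableSpace E] {F : Measure E}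

theorem measure_lt_norm_lt_top (hF : Integrable (fun x => min (‖x‖ ^ 2) 1) F) {δ : ℝ}
    (hδ : 0 < δ) : F {x | δ < ‖x‖} < ∞ := by
  refine (measure_mono fun x (hx : δ < ‖x‖) => ?_).trans_lt
    (hF.measure_ge_lt_top (ε := min (δ ^ 2) 1) (by positivity))
  exact min_le_min_right 1 (pow_le_pow_left₀ hδ.le hx.le 2)

/-- Truncation functions in the wide sense: bounded measurable functions that agree with the
identity near the origin up to second order. Besides the continuously differentiable ones this
covers the identity cut off outside the unit ball. -/
structure IsTruncation (h : E → E) : Prop where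
  measurable : Measurable h
  bounded : ∃ M, ∀ x, ‖h x‖ ≤ M
  isBigO_sub : (fun x => x - h x) =O[𝓝 0] fun x => ‖x‖ ^ 2

theorem IsTruncation.of_eventually_eq {h : E → E} (hm : Measurable h)
    (hbdd : ∃ M, ∀ x, ‖h x‖ ≤ M) (h0 : ∀ᶠ x in 𝓝 0, h x = x) : IsTruncation h where
  measurable := hm
  bounded := hbdd
  isBigO_sub := .of_bound 0 (h0.mono fun x hx => by simp [hx])

variable [OpensMeasurableSpace E]

theorem integrable_min_norm_sq_one_iff :
    Integrable (fun x => min (‖x‖ ^ 2) 1) F ↔ ∫⁻ x, ENNReal.ofReal (min (‖x‖ ^ 2) 1) ∂F ≠ ∞ :=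
  (lintegral_ofReal_ne_top_iff_integrable (by fun_prop) (.of_forall fun x => by positivity)).symm

theorem integrable_of_isBigO_norm_sq {G : Type*} [NormedAddCommGroup G] {f : E → G}
    (hF : Integrable (fun x => min (‖x‖ ^ 2) 1) F) (hfm : AEStronglyMeasurable f F)
    (hsmall : f =O[𝓝 0] fun x => ‖x‖ ^ 2)
    (hlarge : ∀ δ > 0, IntegrableOn f {x | δ < ‖x‖} F) : Integrable f F := by
  have hmin : (fun x : E => min (‖x‖ ^ 2) 1) =ᶠ[𝓝 0] fun x => ‖x‖ ^ 2 := by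
    filter_upwards [Metric.ball_mem_nhds (0 : E) one_pos] with x hx
    exact min_eq_left (pow_le_one₀ (norm_nonneg x) (mem_ball_zero_iff.mp hx).le)
  obtain ⟨s, hs, hfs⟩ := (hsmall.trans_eventuallyEq hmin.symm).integrableAtFilter
    hfm.stronglyMeasurableAtFilter (hF.integrableAtFilter _)
  obtain ⟨δ, hδ, hball⟩ := Metric.nhds_basis_closedBall.mem_iff.mp hs
  refine integrableOn_univ.mp (((hfs.mono_set hball).union (hlarge δ hδ)).mono_set fun x _ => ?_)
  exact (le_or_gt ‖x‖ δ).imp mem_closedBall_zero_iff.mpr id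

theorem integrableOn_norm_rpow_of_one_lt_norm {q : ℝ}
    (hF : Integrable (fun x => min (‖x‖ ^ 2) 1) F)
    (htail : IntegrableOn (fun x => ‖x‖ ^ q) {x | 1 < ‖x‖} F) {δ : ℝ} (hδ : 0 < δ) :
    IntegrableOn (fun x => ‖x‖ ^ q) {x | δ < ‖x‖} F := by
  have hannulus : IntegrableOn (fun x => ‖x‖ ^ q) ({x | δ < ‖x‖} ∩ {x | ‖x‖ ≤ 1}) F := by
    have hmeas : MeasurableSet ({x : E | δ < ‖x‖} ∩ {x | ‖x‖ ≤ 1}) :=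
      (measurableSet_lt measurable_const measurable_norm).inter
        (measurableSet_le measurable_norm measurable_const)
    have hfin : F ({x | δ < ‖x‖} ∩ {x | ‖x‖ ≤ 1}) ≠ ∞ :=
      measure_ne_top_of_subset inter_subset_left (measure_lt_norm_lt_top hF hδ).ne
    refine integrable_rpow_of_comparable (f := fun _ => 1) (k := δ) (K := 1)
      (integrableOn_const hfin) (by fun_prop) hδ (.of_forall fun _ => one_pos)
      ((ae_restrict_mem hmeas).mono fun x hx => ?_) ((ae_restrict_mem hmeas).mono fun x hx => ?_)
    · exact (mul_one δ).trans_le hx.1.le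
    · exact hx.2.trans_eq (mul_one 1).symm
  refine (hannulus.union htail).mono_set fun x hx => ?_
  exact (le_or_gt ‖x‖ 1).imp (fun h => ⟨hx, h⟩) id

end LevyMeasure

section Admissible

variable {E : Type*} [NormedAddCommGroup E] [InnerProductSpace ℝ E] [MeasurableSpace E]
  {F : Measure E} {π : E}

/-- The exposures `π` for which wealth stays strictly positive after almost every jump. -/
def admissibleExposures (F : Measure E) : Set E := {π | F {x | 1 + ⟪π, x⟫ ≤ 0} = 0}

theorem mem_admissibleExposures_iff :
    π ∈ admissibleExposures F ↔ ∀ᵐ x ∂F, 0 < 1 + ⟪π, x⟫ := by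
  simp only [admissibleExposures, mem_ofPred_eq, ae_iff, not_lt]

theorem convex_admissibleExposures (F : Measure E) : Convex ℝ (admissibleExposures F) := by
  intro π₁ h₁ π₂ h₂ s t hs ht hst
  rw [mem_admissibleExposures_iff] at *
  filter_upwards [h₁, h₂] with x hx₁ hx₂
  have hpos : 0 < s • (1 + ⟪π₁, x⟫) + t • (1 + ⟪π₂, x⟫) := convex_Ioi (0 : ℝ) hx₁ hx₂ hs ht hst
  rw [inner_add_left, real_inner_smul_left, real_inner_smul_left]
  simp only [smul_eq_mul] at hpos
  linarith

theorem ae_forall_mem_interior_admissibleExposures [SecondCountableTopology E] (F : Measure E) :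
    ∀ᵐ x ∂F, ∀ π ∈ interior (admissibleExposures F), 0 ≤ 1 + ⟪π, x⟫ := by
  obtain ⟨D, hDc, hD⟩ := TopologicalSpace.exists_countable_dense E
  have hcount : ∀ᵐ x ∂F, ∀ π ∈ interior (admissibleExposures F) ∩ D, 0 < 1 + ⟪π, x⟫ :=
    (ae_ball_iff (hDc.mono inter_subset_right)).mpr fun π hπ =>
      mem_admissibleExposures_iff.mp (interior_subset hπ.1)
  filter_upwards [hcount] with x hx π hπ
  have hclosed : IsClosed {π : E | 0 ≤ 1 + ⟪π, x⟫} := isClosed_le (by fun_prop) (by fun_prop)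
  exact closure_minimal (fun π' hπ' => (hx π' hπ').le) hclosed
    (hD.open_subset_closure_inter isOpen_interior hπ)

theorem exists_mul_norm_le_one_add_inner [SecondCountableTopology E]
    (hπ : π ∈ interior (admissibleExposures F)) :
    ∃ ε > 0, ∀ᵐ x ∂F, ε * ‖x‖ ≤ 1 + ⟪π, x⟫ := by
  obtain ⟨ε, hε, hball⟩ := Metric.nhds_basis_closedBall.mem_iff.mp (isOpen_interior.mem_nhds hπ)
  refine ⟨ε, hε, ?_⟩
  filter_upwards [ae_forall_mem_interior_admissibleExposures F] with x hx
  rcases eq_or_ne x 0 with rfl | hx0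
  · simp
  have hnorm : ‖x‖ ≠ 0 := norm_ne_zero_iff.mpr hx0
  -- Move `π` by `ε` in the direction in which the jump `x` costs most.
  have hmem : π - (ε / ‖x‖) • x ∈ Metric.closedBall π ε := by
    rw [mem_closedBall_iff_norm, sub_sub_cancel_left, norm_neg, norm_smul, norm_div, norm_norm,
      Real.norm_of_nonneg hε.le, div_mul_cancel₀ ε hnorm]
  have hinner : ⟪π - (ε / ‖x‖) • x, x⟫ = ⟪π, x⟫ - ε * ‖x‖ := by
    rw [inner_sub_left, real_inner_smul_left, real_inner_self_eq_norm_sq]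
    field_simp
  linarith [hx _ (hball hmem)]

end Admissible

section CompensatedUtility

variable {E : Type*} [NormedAddCommGroup E] [InnerProductSpace ℝ E]

/-- The utility of a jump `x` at exposure `π`, compensated by its truncated linear part. -/
noncomputable def compensatedUtility (p : ℝ) (h : E → E) (π x : E) : ℝ :=
  powerUtility p (1 + ⟪π, x⟫) - ⟪π, h x⟫

/-- The growth rate `g` of expected power utility at a constant exposure `π`, for a Lévy process
with drift `b`, Gaussian covariance form `Q` and Lévy measure `F`. -/
noncomputable def utilityGrowthRate [MeasurableSpace E] (p : ℝ) (b : E) (Q : QuadraticForm ℝ E)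
    (F : Measure E) (h : E → E) (π : E) : ℝ :=
  ⟪π, b⟫ - p / 2 * Q π + ∫ x, compensatedUtility p h π x ∂F

variable {p : ℝ} {h : E → E}

theorem isBigO_compensatedUtility (hp1 : p ≠ 1)
    (hh : (fun x => x - h x) =O[𝓝 0] fun x => ‖x‖ ^ 2) (π : E) :
    compensatedUtility p h π =O[𝓝 0] fun x => ‖x‖ ^ 2 := by
  have hinner (v : E → E) : (fun x => ⟪π, v x⟫) =O[𝓝 0] v :=
    .of_bound ‖π‖ (.of_forall fun x => norm_inner_le_norm π (v x))
  have htendsto : Tendsto (fun x : E => ⟪π, x⟫) (𝓝 0) (𝓝 0) :=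
    Continuous.tendsto' (by fun_prop) _ _ (inner_zero_right π)
  have hutility : (fun x : E => powerUtility p (1 + ⟪π, x⟫) - ⟪π, x⟫) =O[𝓝 0] fun x => ‖x‖ ^ 2 :=
    ((isBigO_powerUtility_one_add_sub hp1).comp_tendsto htendsto).trans
      ((hinner id).norm_right.pow 2)
  refine (hutility.add ((hinner fun x => x - h x).trans hh)).congr_left fun x => ?_
  simp only [compensatedUtility, inner_sub_right]
  ring

theorem mul_compensatedUtility_add_le (hp : 0 ≤ p) (hp1 : p ≠ 1) {π₁ π₂ x : E}
    (h₁ : 0 < 1 + ⟪π₁, x⟫) (h₂ : 0 < 1 + ⟪π₂, x⟫) {s t : ℝ} (hs : 0 ≤ s) (ht : 0 ≤ t)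
    (hst : s + t = 1) :
    s * compensatedUtility p h π₁ x + t * compensatedUtility p h π₂ x ≤
      compensatedUtility p h (s • π₁ + t • π₂) x := by
  have hconc := (concaveOn_powerUtility hp hp1).2 h₁ h₂ hs ht hst
  have hwealth : s • (1 + ⟪π₁, x⟫) + t • (1 + ⟪π₂, x⟫) = 1 + ⟪s • π₁ + t • π₂, x⟫ := by
    simp only [inner_add_left, real_inner_smul_left, smul_eq_mul]
    linear_combination hst
  rw [hwealth, smul_eq_mul, smul_eq_mul] at hconc
  simp only [compensatedUtility, inner_add_left, real_inner_smul_left] at hconc ⊢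
  linarith

variable [MeasurableSpace E] [BorelSpace E] [SecondCountableTopology E] {F : Measure E} {π : E}

theorem measurable_compensatedUtility (p : ℝ) (hh : Measurable h) (π : E) :
    Measurable (compensatedUtility p h π) := by
  unfold compensatedUtility powerUtility
  fun_prop

theorem integrableOn_one_add_inner_rpow {q : ℝ} (hF : Integrable (fun x => min (‖x‖ ^ 2) 1) F)
    (htail : IntegrableOn (fun x => ‖x‖ ^ q) {x | 1 < ‖x‖} F)
    (hπ : π ∈ interior (admissibleExposures F)) {δ : ℝ} (hδ : 0 < δ) :
    IntegrableOn (fun x => (1 + ⟪π, x⟫) ^ q) {x | δ < ‖x‖} F := by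
  obtain ⟨ε, hε, hlow⟩ := exists_mul_norm_le_one_add_inner hπ
  have hmem : ∀ᵐ x ∂F.restrict {x | δ < ‖x‖}, δ < ‖x‖ :=
    ae_restrict_mem (measurableSet_lt measurable_const measurable_norm)
  refine integrable_rpow_of_comparable (integrableOn_norm_rpow_of_one_lt_norm hF htail hδ)
    (by fun_prop) hε (hmem.mono fun x hx => hδ.trans hx) (ae_restrict_of_ae hlow)
    (K := δ⁻¹ + ‖π‖) ?_
  filter_upwards [hmem] with x hx
  have hone : 1 ≤ δ⁻¹ * ‖x‖ := (one_le_inv_mul₀ hδ).mpr hx.le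
  linarith [real_inner_le_norm π x]

theorem integrable_compensatedUtility (hp1 : p ≠ 1)
    (hF : Integrable (fun x => min (‖x‖ ^ 2) 1) F)
    (htail : IntegrableOn (fun x => ‖x‖ ^ (1 - p)) {x | 1 < ‖x‖} F) (hh : IsTruncation h)
    (hπ : π ∈ interior (admissibleExposures F)) : Integrable (compensatedUtility p h π) F := by
  refine integrable_of_isBigO_norm_sq hF
    (measurable_compensatedUtility p hh.measurable π).aestronglyMeasurable
    (isBigO_compensatedUtility hp1 hh.isBigO_sub π) fun δ hδ => ?_
  have hfin : F {x | δ < ‖x‖} ≠ ∞ := (measure_lt_norm_lt_top hF hδ).ne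
  obtain ⟨M, hM⟩ := hh.bounded
  have hh_int : IntegrableOn h {x | δ < ‖x‖} F :=
    Measure.integrableOn_of_bounded hfin hh.measurable.aestronglyMeasurable (.of_forall hM)
  exact (((integrableOn_one_add_inner_rpow hF htail hπ hδ).sub
    (integrableOn_const hfin)).div_const (1 - p)).sub (hh_int.const_inner π)

theorem concaveOn_utilityGrowthRate (hp : 0 ≤ p) (hp1 : p ≠ 1) (b : E) {Q : QuadraticForm ℝ E}
    (hQ : ∀ v, 0 ≤ Q v) (hF : Integrable (fun x => min (‖x‖ ^ 2) 1) F)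
    (htail : IntegrableOn (fun x => ‖x‖ ^ (1 - p)) {x | 1 < ‖x‖} F) (hh : IsTruncation h) :
    ConcaveOn ℝ (interior (admissibleExposures F)) (utilityGrowthRate p b Q F h) := by
  have hconv := (convex_admissibleExposures F).interior
  have hdrift : ConcaveOn ℝ (interior (admissibleExposures F)) fun π => ⟪π, b⟫ :=
    ((innerₗ E).flip b).concaveOn hconv
  have hgauss : ConvexOn ℝ (interior (admissibleExposures F)) fun π => p / 2 * Q π :=
    ((convexOn_quadraticForm hQ).subset (subset_univ _) hconv).smul (by positivity)
  refine (hdrift.sub hgauss).add (concaveOn_integral hconv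
    (fun π hπ => integrable_compensatedUtility hp1 hF htail hh hπ) ?_)
  intro π₁ h₁ π₂ h₂ s t hs ht hst
  filter_upwards [mem_admissibleExposures_iff.mp (interior_subset h₁),
    mem_admissibleExposures_iff.mp (interior_subset h₂)] with x hx₁ hx₂
  exact mul_compensatedUtility_add_le hp hp1 hx₁ hx₂ hs ht hst

end CompensatedUtility

theorem stmt0_general {E : Type*} [NormedAddCommGroup E] [InnerProductSpace ℝ E]
    [FiniteDimensional ℝ E] [MeasurableSpace E] [BorelSpace E] {p : ℝ} (hp : 0 ≤ p) (hp1 : p ≠ 1)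
    (b : E) {Q : QuadraticForm ℝ E} (hQ : ∀ v, 0 ≤ Q v) {F : Measure E}
    (hF : Integrable (fun x => min (‖x‖ ^ 2) 1) F)
    (htail : IntegrableOn (fun x => ‖x‖ ^ (1 - p)) {x | 1 < ‖x‖} F) {h : E → E}
    (hh : IsTruncation h) :
    (∀ π ∈ interior (admissibleExposures F), Integrable (compensatedUtility p h π) F) ∧
    ContinuousOn (utilityGrowthRate p b Q F h) (interior (admissibleExposures F)) ∧
    ConcaveOn ℝ (interior (admissibleExposures F)) (utilityGrowthRate p b Q F h) :=
  have hconc := concaveOn_utilityGrowthRate hp hp1 b hQ hF htail hh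
  ⟨fun _ hπ => integrable_compensatedUtility hp1 hF htail hh hπ,
    hconc.continuousOn isOpen_interior, hconc⟩

section RealLine

variable {F : Measure ℝ}

theorem restrict_Ioi_of_measure_Iic_eq_zero {a : ℝ} (hF : F (Iic a) = 0) :
    F.restrict (Ioi a) = F :=
  Measure.restrict_eq_self_of_ae_mem <| (measure_eq_zero_iff_ae_notMem.mp hF).mono
    fun _ hx => notMem_Iic.mp hx

theorem integrableOn_norm_rpow_of_one_add_rpow {q : ℝ} (hneg : F (Iic (-1)) = 0)
    (hint : IntegrableOn (fun x => (1 + x) ^ q) (Ioi 1) F) :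
    IntegrableOn (fun x => ‖x‖ ^ q) {x : ℝ | 1 < ‖x‖} F := by
  have hset : {x : ℝ | 1 < ‖x‖} =ᵐ[F] Ioi (1 : ℝ) := by
    filter_upwards [measure_eq_zero_iff_ae_notMem.mp hneg] with x hx
    have hx' : ¬1 < -x := fun h => hx (by rw [mem_Iic]; linarith)
    exact propext (lt_abs.trans (or_iff_left hx'))
  refine IntegrableOn.congr_set_ae ?_ hset
  have hmem : ∀ᵐ x ∂F.restrict (Ioi 1), 1 < x := ae_restrict_mem measurableSet_Ioi
  refine integrable_rpow_of_comparable hint (k := 1 / 2) (K := 1) (by fun_prop) one_half_pos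
    (hmem.mono fun x hx => ?_) (hmem.mono fun x hx => ?_) (hmem.mono fun x hx => ?_)
  · linarith
  · rw [Real.norm_of_nonneg] <;> linarith
  · rw [Real.norm_of_nonneg] <;> linarith

theorem admissibleExposures_real (F : Measure ℝ) :
    admissibleExposures F = {π : ℝ | F {x | 1 + π * x ≤ 0} = 0} := by
  simp only [admissibleExposures, Real.inner_apply]

theorem compensatedUtility_real (p : ℝ) (h : ℝ → ℝ) (π : ℝ) :
    compensatedUtility p h π = fun x => ((1 + π * x) ^ (1 - p) - 1) / (1 - p) - π * h x := by
  funext x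
  simp only [compensatedUtility, powerUtility, Real.inner_apply]

theorem utilityGrowthRate_real (p b c : ℝ) (F : Measure ℝ) (h : ℝ → ℝ) :
    utilityGrowthRate p b (c • QuadraticMap.sq) F h = fun π => π * b - p * π ^ 2 * c / 2 +
      ∫ x, (((1 + π * x) ^ (1 - p) - 1) / (1 - p) - π * h x) ∂F := by
  funext π
  simp only [utilityGrowthRate, compensatedUtility_real, Real.inner_apply, smul_apply,
    QuadraticMap.sq_apply, smul_eq_mul]
  ring

end RealLine

theorem stmt0 (p b c : ℝ) (hp : 0 < p) (hp1 : p ≠ 1) (hc : 0 ≤ c)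
    (F : Measure ℝ)
    (hF0 : F {0} = 0)
    (hFlevy : ∫⁻ x, ENNReal.ofReal (min (x ^ 2) 1) ∂F ≠ ∞)
    (hFneg : F (Iic (-1 : ℝ)) = 0)
    (hFint : IntegrableOn (fun x => (1 + x) ^ (1 - p)) (Ioi (1 : ℝ)) F)
    (h : ℝ → ℝ) (hhC1 : ContDiff ℝ 1 h)
    (hhbdd : ∃ M, ∀ x, |h x| ≤ M)
    (hh0 : ∀ᶠ x in 𝓝 (0 : ℝ), h x = x)
    (hhcpt : ∃ R > 0, ∀ x, R < |x| → h x = 0) :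
    (∀ π ∈ interior {π : ℝ | F {x | 1 + π * x ≤ 0} = 0},
      IntegrableOn (fun x => ((1 + π * x) ^ (1 - p) - 1) / (1 - p) - π * h x) (Ioi (-1 : ℝ)) F) ∧
    ContinuousOn
      (fun π => π * b - p * π ^ 2 * c / 2 +
        ∫ x in Ioi (-1 : ℝ), (((1 + π * x) ^ (1 - p) - 1) / (1 - p) - π * h x) ∂F)
      (interior {π : ℝ | F {x | 1 + π * x ≤ 0} = 0}) ∧
    ConcaveOn ℝ (interior {π : ℝ | F {x | 1 + π * x ≤ 0} = 0})
      (fun π => π * b - p * π ^ 2 * c / 2 +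
        ∫ x in Ioi (-1 : ℝ), (((1 + π * x) ^ (1 - p) - 1) / (1 - p) - π * h x) ∂F) := by
  have hQ : ∀ v, 0 ≤ (c • QuadraticMap.sq : QuadraticForm ℝ ℝ) v := fun v =>
    mul_nonneg hc (mul_self_nonneg v)
  have hF : Integrable (fun x : ℝ => min (‖x‖ ^ 2) 1) F :=
    integrable_min_norm_sq_one_iff.mpr (by simpa only [Real.norm_eq_abs, sq_abs] using hFlevy)
  simpa only [IntegrableOn, restrict_Ioi_of_measure_Iic_eq_zero hFneg, admissibleExposures_real,
    compensatedUtility_real, utilityGrowthRate_real] using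
    stmt0_general hp.le hp1 b hQ hF (integrableOn_norm_rpow_of_one_add_rpow hFneg hFint)
      (.of_eventually_eq hhC1.continuous.measurable hhbdd hh0)
end

section
/- Let c : [0,1] → ℝ be concave, let N ≥ 2, set t_i = i/N for i = 0, …, N, and let η := max_{0 ≤ i ≤ N−1} |c(t_{i+1}) − c(t_i)|. For x ∈ [0,1) let [x]_N := t_i where i is the unique index with t_i ≤ x < t_{i+1}. Then for every x ∈ [0,1), |c(x) − c([x]_N)| ≤ 2η. -/
open Set Filter
open scoped Topology

/-!
On the cell `[tᵢ, tᵢ₊₁]` a concave function lies above the minimum of its two end values, which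
gives `c tᵢ - c x ≤ η`. For an upper bound, use concavity at a grid point `q` between `x` and
another grid point `u` with `|x - q| ≤ |q - u|`: past `q`, the graph stays below the line through
`u` and `q`, so `c x - c q ≤ |c q - c u| ≤ η`. If `i ≥ 1`, take `q = tᵢ` and `u = tᵢ₋₁`. In the
first cell there is no grid point to the left, so take `q = t₁` and `u = t₂`, which exists because
`N ≥ 2`; returning from `t₁` to `t₀` costs one more `η`, whence the factor `2`.
-/

section Segment

lemma concaveOn_left_sub_le_abs_sub_of_mem_segment {𝕜 E β : Type*} [Semiring 𝕜] [PartialOrder 𝕜]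
    [AddCommMonoid E] [Module 𝕜 E] [AddCommGroup β] [LinearOrder β] [IsOrderedAddMonoid β]
    [Module 𝕜 β] [PosSMulStrictMono 𝕜 β] {S : Set E} {c : E → β} (hc : ConcaveOn 𝕜 S c)
    {u q x : E} (hu : u ∈ S) (hq : q ∈ S) (hx : x ∈ segment 𝕜 u q) :
    c u - c x ≤ |c q - c u| := by
  rcases min_le_iff.mp (hc.ge_on_segment hu hq hx) with h | h
  · exact (sub_nonpos.mpr h).trans (abs_nonneg _)
  · rw [abs_sub_comm]
    exact (sub_le_sub_left h _).trans (le_abs_self _)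

variable {𝕜 E β : Type*} [Field 𝕜] [LinearOrder 𝕜] [IsStrictOrderedRing 𝕜]
  [AddCommGroup E] [Module 𝕜 E]

lemma concaveOn_map_add_smul_sub_le [AddCommGroup β] [PartialOrder β] [IsOrderedAddMonoid β]
    [Module 𝕜 β] [PosSMulMono 𝕜 β] {S : Set E} {c : E → β} (hc : ConcaveOn 𝕜 S c) {u q : E}
    {s : 𝕜} (hu : u ∈ S) (hs : 0 ≤ s) (hx : q + s • (q - u) ∈ S) :
    c (q + s • (q - u)) ≤ c q + s • (c q - c u) := by
  have hpos : 0 < 1 + s := by positivity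
  have hq : (1 + s)⁻¹ • (q + s • (q - u)) + ((1 + s)⁻¹ * s) • u = q := by
    rw [mul_smul, ← smul_add, inv_smul_eq_iff₀ hpos.ne']
    module
  have hjensen : (1 + s)⁻¹ • c (q + s • (q - u)) + ((1 + s)⁻¹ * s) • c u ≤ c q := by
    simpa only [hq] using hc.2 hx hu (inv_nonneg.mpr hpos.le)
      (by positivity : 0 ≤ (1 + s)⁻¹ * s) (by field_simp)
  rw [mul_smul, ← smul_add, inv_smul_le_iff_of_pos hpos] at hjensen
  calc c (q + s • (q - u)) ≤ (1 + s) • c q - s • c u := le_sub_iff_add_le.mpr hjensen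
    _ = c q + s • (c q - c u) := by module

variable [AddCommGroup β] [LinearOrder β] [IsOrderedAddMonoid β] [Module 𝕜 β]
  [PosSMulMono 𝕜 β] {S : Set E} {c : E → β} {u q x : E}

lemma concaveOn_sub_le_abs_sub_of_mem_segment_reflection
    (hc : ConcaveOn 𝕜 S c) (hu : u ∈ S) (hx : x ∈ S) (hxq : x ∈ segment 𝕜 q (q + (q - u))) :
    c x - c q ≤ |c q - c u| := by
  rw [segment_eq_image'] at hxq
  obtain ⟨s, ⟨hs₀, hs₁⟩, rfl⟩ := hxq
  simp only [add_sub_cancel_left] at hx ⊢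
  calc c (q + s • (q - u)) - c q ≤ s • (c q - c u) :=
        sub_le_iff_le_add'.mpr (concaveOn_map_add_smul_sub_le hc hu hs₀ hx)
    _ ≤ s • |c q - c u| := smul_le_smul_of_nonneg_left (le_abs_self _) hs₀
    _ ≤ |c q - c u| := smul_le_of_le_one_left (abs_nonneg _) hs₁

end Segment

section UniformGrid

lemma add_natCast_mul_mem_Icc {R : Type*} [Semiring R] [PartialOrder R] [IsOrderedRing R]
    {a h : R} {N i : ℕ} (hh : 0 ≤ h) (hi : i ≤ N) :
    a + i * h ∈ Icc a (a + N * h) :=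
  ⟨le_add_of_nonneg_right (mul_nonneg i.cast_nonneg hh), by gcongr⟩

variable {𝕜 β : Type*} [Field 𝕜] [LinearOrder 𝕜] [IsStrictOrderedRing 𝕜]

lemma exists_floor_eq_natCast_and_mem_Icc [FloorRing 𝕜] {a h x : 𝕜} {N : ℕ} (hh : 0 < h)
    (hx : x ∈ Ico a (a + N * h)) :
    ∃ i < N, ⌊(x - a) / h⌋ = i ∧ x ∈ Icc (a + i * h) (a + (i + 1) * h) := by
  have hnonneg : 0 ≤ (x - a) / h := div_nonneg (sub_nonneg.mpr hx.1) hh.le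
  obtain ⟨i, hi⟩ := Int.eq_ofNat_of_zero_le (Int.floor_nonneg.mpr hnonneg)
  obtain ⟨hlower, hupper⟩ := Int.floor_eq_iff.mp hi
  rw [Int.cast_natCast, le_div_iff₀ hh] at hlower
  rw [Int.cast_natCast, div_lt_iff₀ hh] at hupper
  have hiN : (i : 𝕜) * h < N * h := by linarith [hx.2]
  exact ⟨i, by exact_mod_cast lt_of_mul_lt_mul_right hiN hh.le, hi, by linarith, by linarith⟩

variable [AddCommGroup β] [LinearOrder β] [IsOrderedAddMonoid β] [Module 𝕜 β]
  [PosSMulMono 𝕜 β] {c : 𝕜 → β} {a h x : 𝕜} {η : β} {N i : ℕ}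

lemma concaveOn_sub_le_abs_sub_of_mem_Icc_right {S : Set 𝕜} {q : 𝕜} (hc : ConcaveOn 𝕜 S c)
    (hu : q - h ∈ S) (hxS : x ∈ S) (hx : x ∈ Icc q (q + h)) :
    c x - c q ≤ |c q - c (q - h)| := by
  refine concaveOn_sub_le_abs_sub_of_mem_segment_reflection hc hu hxS ?_
  rw [sub_sub_cancel]
  exact Icc_subset_segment hx

lemma concaveOn_sub_le_abs_sub_of_mem_Icc_left {S : Set 𝕜} {q : 𝕜} (hc : ConcaveOn 𝕜 S c)
    (hu : q + h ∈ S) (hxS : x ∈ S) (hx : x ∈ Icc (q - h) q) :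
    c x - c q ≤ |c (q + h) - c q| := by
  rw [abs_sub_comm]
  refine concaveOn_sub_le_abs_sub_of_mem_segment_reflection hc hu hxS ?_
  rw [segment_symm, sub_add_cancel_left, ← sub_eq_add_neg]
  exact Icc_subset_segment hx

lemma concaveOn_sub_gridPoint_le (hc : ConcaveOn 𝕜 (Icc a (a + N * h)) c) (hh : 0 ≤ h) (hN : 2 ≤ N)
    (hη : ∀ i < N, |c (a + (i + 1) * h) - c (a + i * h)| ≤ η) (hi : i < N)
    (hx : x ∈ Icc (a + i * h) (a + (i + 1) * h)) :
    c x - c (a + i * h) ≤ 2 • η := by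
  have hgrid {j : ℕ} (hj : j ≤ N) := add_natCast_mul_mem_Icc (a := a) hh hj
  have hxS : x ∈ Icc a (a + N * h) :=
    ⟨(hgrid hi.le).1.trans hx.1, hx.2.trans (by exact_mod_cast (hgrid hi).2)⟩
  rcases i with _ | j
  · have htwo : a + h + h = a + (1 + 1) * h := by ring
    have hfirst : c (a + h) - c a ≤ η :=
      (le_abs_self _).trans (by simpa using hη 0 hi)
    have hsecond : |c (a + h + h) - c (a + h)| ≤ η := by
      simpa [htwo] using hη 1 hN
    have hmem : a + h + h ∈ Icc a (a + N * h) := by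
      simpa [htwo, one_add_one_eq_two] using hgrid hN
    have hextra : c x - c (a + h) ≤ |c (a + h + h) - c (a + h)| :=
      concaveOn_sub_le_abs_sub_of_mem_Icc_left hc hmem hxS (by simpa using hx)
    calc c x - c (a + (0 : ℕ) * h) = (c x - c (a + h)) + (c (a + h) - c a) := by simp
      _ ≤ η + η := add_le_add (hextra.trans hsecond) hfirst
      _ = 2 • η := (two_nsmul η).symm
  · have hprev : a + (j + 1 : ℕ) * h - h = a + j * h := by push_cast; ring
    have hnext : a + (j + 1 : ℕ) * h + h = a + ((j + 1 : ℕ) + 1) * h := by ring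
    have hj : j < N := by omega
    have hη₀ : 0 ≤ η := (abs_nonneg _).trans (hη j hj)
    calc c x - c (a + (j + 1 : ℕ) * h)
        ≤ |c (a + (j + 1 : ℕ) * h) - c (a + (j + 1 : ℕ) * h - h)| :=
          concaveOn_sub_le_abs_sub_of_mem_Icc_right hc (hprev ▸ hgrid hj.le) hxS (hnext ▸ hx)
      _ ≤ η := by simpa only [hprev] using mod_cast hη j hj
      _ ≤ 2 • η := le_self_nsmul hη₀ two_ne_zero

lemma concaveOn_abs_sub_gridPoint_le (hc : ConcaveOn 𝕜 (Icc a (a + N * h)) c) (hh : 0 ≤ h)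
    (hN : 2 ≤ N) (hη : ∀ i < N, |c (a + (i + 1) * h) - c (a + i * h)| ≤ η) (hi : i < N)
    (hx : x ∈ Icc (a + i * h) (a + (i + 1) * h)) :
    |c x - c (a + i * h)| ≤ 2 • η := by
  have := PosSMulMono.toPosSMulStrictMono (α := 𝕜) (β := β)
  refine abs_sub_le_iff.mpr ⟨concaveOn_sub_gridPoint_le hc hh hN hη hi hx, ?_⟩
  have hright : a + (i + 1) * h ∈ Icc a (a + N * h) := by
    exact_mod_cast add_natCast_mul_mem_Icc hh hi
  calc c (a + i * h) - c x ≤ |c (a + (i + 1) * h) - c (a + i * h)| :=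
        concaveOn_left_sub_le_abs_sub_of_mem_segment hc (add_natCast_mul_mem_Icc hh hi.le) hright
          (Icc_subset_segment hx)
    _ ≤ η := hη i hi
    _ ≤ 2 • η := le_self_nsmul ((abs_nonneg _).trans (hη i hi)) two_ne_zero

end UniformGrid

theorem stmt9_general {𝕜 β : Type*} [Field 𝕜] [LinearOrder 𝕜] [IsStrictOrderedRing 𝕜]
    [FloorRing 𝕜] [AddCommGroup β] [LinearOrder β] [IsOrderedAddMonoid β] [Module 𝕜 β]
    [PosSMulMono 𝕜 β] {a h : 𝕜} (hh : 0 < h) (N : ℕ) (hN : 2 ≤ N) (c : 𝕜 → β)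
    (hc : ConcaveOn 𝕜 (Icc a (a + N * h)) c) :
    ∀ x ∈ Ico a (a + N * h),
      |c x - c (a + ⌊(x - a) / h⌋ * h)| ≤
        2 • (Finset.range N).sup' (Finset.nonempty_range_iff.mpr (Nat.ne_zero_of_lt hN))
          (fun i => |c (a + (i + 1) * h) - c (a + i * h)|) := by
  intro x hx
  obtain ⟨i, hi, hfloor, hcell⟩ := exists_floor_eq_natCast_and_mem_Icc hh hx
  rw [hfloor, Int.cast_natCast]
  exact concaveOn_abs_sub_gridPoint_le hc hh.le hN
    (fun j hj => Finset.le_sup' (fun j : ℕ => |c (a + (j + 1) * h) - c (a + j * h)|)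
      (Finset.mem_range.mpr hj)) hi hcell

theorem stmt9 (c : ℝ → ℝ) (hc : ConcaveOn ℝ (Icc 0 1) c)
    (N : ℕ) (hN : 2 ≤ N) :
    ∀ x ∈ Ico (0:ℝ) 1,
      |c x - c ((⌊(N : ℝ) * x⌋ : ℝ) / N)| ≤
        2 * (Finset.range N).sup' (Finset.nonempty_range_iff.mpr (by omega))
          (fun i => |c (((i : ℝ) + 1) / N) - c ((i : ℝ) / N)|) := by
  have hend : (0 : ℝ) + N * (N : ℝ)⁻¹ = 1 := by simp [(two_pos.trans_le hN).ne']
  simpa [hend, div_eq_mul_inv, mul_comm] using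
    stmt9_general (a := 0) (by positivity : 0 < (N : ℝ)⁻¹) N hN c (by rwa [hend])
end
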